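/- Assume A is finitely generated, projective, and faithfully flat as an R-module. Then: (i) S_A is a finitely generated projective module over the polynomial ring R[X]; (ii) the quotient of S_A by the ideal generated by X − 1 is isomorphic as an R-algebra to A, via the evaluation-at-1 homomorphism; (iii) the quotient of S_A by the ideal generated by X is isomorphic as an R-algebra to TrivSqZeroExt R (A ⧸ Submodule.span R {(1 : A)}). -/

import Mathlib

/-- A finitely generated projective faithfully flat algebra admits a linear retraction onto the
base ring. -/
theorem Module.FaithfullyFlat.exists_linearMap_apply_one_eq_one (R A : Type*) [CommRing R]
    [CommRing A] [Algebra R A] [Module.Finite R A] [Module.Projective R A]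
    [Module.FaithfullyFlat R A] : ∃ φ : A →ₗ[R] R, φ 1 = 1 := by
  let I : Ideal R := LinearMap.range (LinearMap.applyₗ (R := R) (M₂ := R) (1 : A))
  suffices h : I = ⊤ from (Ideal.eq_top_iff_one I).1 h
  refine ((Module.FaithfullyFlat.iff_flat_and_ideal_smul_eq_top R A).1 inferInstance).2 I ?_
  obtain ⟨n, f, g, -, -, hfg⟩ := Module.Finite.exists_comp_eq_id_of_projective R A
  have one_mem : (1 : A) ∈ I • (⊤ : Submodule R A) := by
    have h : f (g 1) = 1 := LinearMap.congr_fun hfg 1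
    rw [← h, ← (Pi.basisFun R (Fin n)).sum_repr (g 1), map_sum]
    refine Submodule.sum_mem _ fun i _ ↦ ?_
    rw [map_smul]
    exact Submodule.smul_mem_smul ⟨LinearMap.proj i ∘ₗ g, by simp⟩ trivial
  rw [Ideal.smul_top_eq_map] at one_mem ⊢
  rw [(Ideal.eq_top_iff_one _).2 one_mem]
  rfl

section PolynomialAlgebra

open Polynomial

attribute [local instance] Polynomial.algebra

variable {R A : Type*} [CommRing R] [CommRing A] [Algebra R A]

/-- The base change to `R[X]` of a linear functional on `A`, acting coefficient-wise. -/
theorem Polynomial.exists_linearMap_coeff_eq (φ : A →ₗ[R] R) :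
    ∃ Φ : A[X] →ₗ[R[X]] R[X], ∀ p n, (Φ p).coeff n = φ (p.coeff n) := by
  let b := (inferInstance : Algebra.IsPushout R R[X] A A[X]).out
  let Φ : A[X] →ₗ[R[X]] R[X] := b.lift ((Algebra.linearMap R R[X]) ∘ₗ φ)
  have hΦ (a : A) : Φ (C a) = C (φ a) := b.lift_eq _ a
  refine ⟨Φ, fun p n ↦ ?_⟩
  induction p using Polynomial.induction_on' with
  | add p q hp hq => simp [hp, hq]
  | monomial k a =>
    have : monomial k a = (X ^ k : R[X]) • C a := by
      rw [Algebra.smul_def, Polynomial.algebraMap_def, coe_mapRingHom, Polynomial.map_pow, map_X,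
        ← C_mul_X_pow_eq_monomial, mul_comm]
    rw [this, map_smul, hΦ, Algebra.smul_def (X ^ k : R[X]) (C a), Polynomial.algebraMap_def]
    simp only [smul_eq_mul, coe_mapRingHom, Polynomial.map_pow, map_X, coeff_X_pow_mul', coeff_C]
    split_ifs <;> simp

/-- If `A` is finitely generated projective with a linear retraction onto `R`, then the polynomials
over `A` with constant coefficient in `R` form a finitely generated projective `R[X]`-module. -/
theorem Subalgebra.finite_and_projective_of_coeff_zero_mem_range [Module.Finite R A]
    [Module.Projective R A] (φ : A →ₗ[R] R) (hφ : φ 1 = 1) (T : Subalgebra R[X] A[X])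
    (hT : (T : Set A[X]) = {p : A[X] | p.coeff 0 ∈ (algebraMap R A).range}) :
    Module.Finite R[X] T ∧ Module.Projective R[X] T := by
  obtain ⟨Φ, hΦ⟩ := exists_linearMap_coeff_eq φ
  have mem_T (p : A[X]) : p ∈ T ↔ p.coeff 0 ∈ (algebraMap R A).range := Set.ext_iff.1 hT p
  let b := (inferInstance : Algebra.IsPushout R R[X] A A[X]).out
  have : Module.Finite R[X] A[X] := .equiv b.equiv
  have : Module.Projective R[X] A[X] := .of_equiv b.equiv
  let π : A[X] →ₗ[R[X]] A[X] := LinearMap.id - Algebra.linearMap R[X] A[X] ∘ₗ Φ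
  have X_mul_divX (p : T) : X * (π p).divX = π p := by
    have h : (π p).coeff 0 = 0 := by
      obtain ⟨r, hr⟩ := (mem_T p).1 p.2
      simp [π, hΦ, ← hr, Algebra.algebraMap_eq_smul_one, hφ]
    simpa [h] using X_mul_divX_add (π p)
  let D : T →ₗ[R[X]] A[X] :=
    { toFun := fun p ↦ (π p).divX
      map_add' := fun p q ↦ by simp [divX_add]
      map_smul' := fun r p ↦ by
        apply isRegular_X.left
        change X * (π (r • p : T)).divX = X * (r • (π p).divX)
        rw [X_mul_divX, mul_smul_comm, X_mul_divX]
        exact map_smul π r p.1 }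
  let i : T →ₗ[R[X]] A[X] × R[X] := D.prod (Φ ∘ₗ T.toSubmodule.subtype)
  let s : A[X] × R[X] →ₗ[R[X]] T := LinearMap.codRestrict T.toSubmodule
    ((LinearMap.mulLeft R[X] (X : A[X])).coprod (Algebra.linearMap R[X] A[X])) fun c ↦ by
      rw [Subalgebra.mem_toSubmodule, mem_T]
      exact ⟨c.2.coeff 0, by simp⟩
  have hsi : s ∘ₗ i = LinearMap.id := by
    ext1 p
    apply Subtype.ext
    change X * (π p).divX + algebraMap R[X] A[X] (Φ p) = (p : A[X])
    rw [X_mul_divX]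
    exact sub_add_cancel (p : A[X]) _
  exact ⟨.of_surjective s (LinearMap.surjective_of_comp_eq_id i s hsi), .of_split i s hsi⟩

end PolynomialAlgebra

section Quotients

open Polynomial

variable {R A : Type*} [CommRing R] [CommRing A] [Algebra R A]

/-- Specializing the polynomials with constant coefficient in `R` at `X = 1` yields `A`. -/
theorem Subalgebra.exists_quotient_span_X_sub_one_algEquiv (S : Subalgebra R A[X])
    (hS : (S : Set A[X]) = {p : A[X] | p.coeff 0 ∈ (algebraMap R A).range})
    (x : S) (hx : (x : A[X]) = X) :
    ∃ e : (S ⧸ Ideal.span {x - 1}) ≃ₐ[R] A,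
      ∀ p : S, e (Ideal.Quotient.mk (Ideal.span {x - 1}) p) = eval 1 (p : A[X]) := by
  have mem_S (p : A[X]) : p ∈ S ↔ p.coeff 0 ∈ (algebraMap R A).range := Set.ext_iff.1 hS p
  let f : S →ₐ[R] A := ((aeval (1 : A)).restrictScalars R).comp S.val
  have hf (p : S) : f p = eval 1 (p : A[X]) := by simp [f, coe_aeval_eq_eval]
  have hsurj : Function.Surjective f := fun a ↦
    ⟨⟨C a * X, (mem_S _).2 ⟨0, by simp⟩⟩, by simp [hf]⟩
  have hker : Ideal.span {x - 1} = RingHom.ker f := by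
    refine le_antisymm ?_ fun p hp ↦ ?_
    · rw [Ideal.span_singleton_le_iff_mem, RingHom.mem_ker, hf]
      simp [hx]
    · rw [RingHom.mem_ker, hf] at hp
      obtain ⟨q, hq⟩ := dvd_iff_isRoot.2 hp
      have hqS : q ∈ S := by
        have h0 := congr_arg (coeff · 0) hq
        simp only [mul_coeff_zero, coeff_sub, coeff_X_zero, coeff_C_zero] at h0
        have : q.coeff 0 = -(p : A[X]).coeff 0 := by rw [h0]; ring
        rw [mem_S, this]
        exact neg_mem ((mem_S _).1 p.2)
      refine Ideal.mem_span_singleton.2 ⟨⟨q, hqS⟩, Subtype.ext ?_⟩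
      simpa [hx] using hq
  exact ⟨(Ideal.quotientEquivAlgOfEq R hker).trans (Ideal.quotientKerAlgEquivOfSurjective hsurj),
    fun p ↦ hf p⟩

/-- Specializing the polynomials with constant coefficient in `R` at `X = 0` yields the trivial
square-zero extension of `R` by `A ⧸ R`. -/
theorem Subalgebra.nonempty_quotient_span_X_algEquiv (φ : A →ₗ[R] R) (hφ : φ 1 = 1)
    [Module Rᵐᵒᵖ (A ⧸ Submodule.span R {(1 : A)})]
    [IsCentralScalar R (A ⧸ Submodule.span R {(1 : A)})] (S : Subalgebra R A[X])
    (hS : (S : Set A[X]) = {p : A[X] | p.coeff 0 ∈ (algebraMap R A).range})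
    (x : S) (hx : (x : A[X]) = X) :
    Nonempty ((S ⧸ Ideal.span {x}) ≃ₐ[R]
      TrivSqZeroExt R (A ⧸ Submodule.span R {(1 : A)})) := by
  have mem_S (p : A[X]) : p ∈ S ↔ p.coeff 0 ∈ (algebraMap R A).range := Set.ext_iff.1 hS p
  have hφr (r : R) : φ (algebraMap R A r) = r := by
    rw [Algebra.algebraMap_eq_smul_one, map_smul, hφ, smul_eq_mul, mul_one]
  have coeff_zero (p : S) : (p : A[X]).coeff 0 = algebraMap R A (φ ((p : A[X]).coeff 0)) := by
    obtain ⟨r, hr⟩ := (mem_S p).1 p.2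
    rw [← hr, hφr]
  let N := Submodule.span R {(1 : A)}
  have mk_eq_zero (a : A) : N.mkQ a = 0 ↔ a ∈ (algebraMap R A).range := by
    rw [Submodule.mkQ_apply, Submodule.Quotient.mk_eq_zero, Submodule.mem_span_singleton]
    simp [Algebra.algebraMap_eq_smul_one]
  let l : S →ₗ[R] TrivSqZeroExt R (A ⧸ N) :=
    { toFun := fun p ↦
        TrivSqZeroExt.inl (φ ((p : A[X]).coeff 0)) + TrivSqZeroExt.inr (N.mkQ ((p : A[X]).coeff 1))
      map_add' := fun p q ↦ by ext <;> simp
      map_smul' := fun r p ↦ by ext <;> simp }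
  have fst_l (p : S) : (l p).fst = φ ((p : A[X]).coeff 0) := by simp [l]
  have snd_l (p : S) : (l p).snd = N.mkQ ((p : A[X]).coeff 1) := by simp [l]
  let f : S →ₐ[R] TrivSqZeroExt R (A ⧸ N) := AlgHom.ofLinearMap l
    (by
      ext
      · rw [fst_l]; simp [hφ]
      · rw [snd_l]; simp [coeff_one])
    (fun p q ↦ by
      ext
      · rw [TrivSqZeroExt.fst_mul, fst_l, fst_l, fst_l, MulMemClass.coe_mul, mul_coeff_zero,
          coeff_zero p, coeff_zero q, ← map_mul, hφr, hφr, hφr]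
      · rw [TrivSqZeroExt.snd_mul, op_smul_eq_smul, snd_l, snd_l, snd_l, fst_l, fst_l,
          MulMemClass.coe_mul, mul_coeff_one, coeff_zero p, coeff_zero q, hφr, hφr,
          mul_comm ((p : A[X]).coeff 1), ← Algebra.smul_def, ← Algebra.smul_def, map_add,
          map_smul, map_smul])
  have hsurj : Function.Surjective f := by
    rintro ⟨r, m⟩
    obtain ⟨a, rfl⟩ := N.mkQ_surjective m
    refine ⟨⟨C (algebraMap R A r) + C a * X, (mem_S _).2 ⟨r, by simp⟩⟩, ?_⟩
    ext
    · exact (fst_l _).trans (by simp [hφr])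
    · exact (snd_l _).trans (by simp [coeff_C])
  have hker : Ideal.span {x} = RingHom.ker f := by
    refine le_antisymm ?_ fun p hp ↦ ?_
    · rw [Ideal.span_singleton_le_iff_mem, RingHom.mem_ker]
      ext
      · exact (fst_l _).trans (by simp [hx])
      · exact (snd_l _).trans (by rw [hx, coeff_X_one]; exact (mk_eq_zero 1).2 (one_mem _))
    · have h0 : φ ((p : A[X]).coeff 0) = 0 :=
        (fst_l p).symm.trans (congr_arg TrivSqZeroExt.fst hp)
      have h1 : N.mkQ ((p : A[X]).coeff 1) = 0 :=
        (snd_l p).symm.trans (congr_arg TrivSqZeroExt.snd hp)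
      refine Ideal.mem_span_singleton.2
        ⟨⟨(p : A[X]).divX, (mem_S _).2 ((mk_eq_zero _).1 h1)⟩, Subtype.ext ?_⟩
      have := X_mul_divX_add (p : A[X])
      rw [coeff_zero p, h0, map_zero, C_0, add_zero] at this
      simp [hx, this]
  exact ⟨(Ideal.quotientEquivAlgOfEq R hker).trans (Ideal.quotientKerAlgEquivOfSurjective hsurj)⟩

end Quotients


/-- Let `A` be a commutative `R`-algebra that is finitely generated, projective
and faithfully flat as an `R`-module. Let `S_A ⊆ A[X]` be the subalgebra of polynomials whose
constant coefficient lies in the image of `R`. Then: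
(i) `S_A` is a finitely generated projective `R[X]`-module (via the coefficient-wise map
`R[X] → A[X]`);
(ii) `S_A ⧸ (X - 1)` is isomorphic to `A` as an `R`-algebra via evaluation at `1`;
(iii) `S_A ⧸ (X)` is isomorphic as an `R`-algebra to the trivial square-zero extension
`TrivSqZeroExt R (A ⧸ R·1)`. -/
theorem stmt3 (R A : Type*) [CommRing R] [CommRing A] [Algebra R A]
    [Module.Finite R A] [Module.Projective R A] [Module.FaithfullyFlat R A]
    [Module Rᵐᵒᵖ (A ⧸ Submodule.span R {(1 : A)})]
    [IsCentralScalar R (A ⧸ Submodule.span R {(1 : A)})] :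
    (letI : Algebra (Polynomial R) (Polynomial A) :=
      (Polynomial.mapRingHom (algebraMap R A)).toAlgebra
     ∀ T : Subalgebra (Polynomial R) (Polynomial A),
      (T : Set (Polynomial A)) =
        {p : Polynomial A | p.coeff 0 ∈ (algebraMap R A).range} →
      Module.Finite (Polynomial R) T ∧ Module.Projective (Polynomial R) T) ∧
    ∀ S : Subalgebra R (Polynomial A),
      (S : Set (Polynomial A)) =
        {p : Polynomial A | p.coeff 0 ∈ (algebraMap R A).range} →
      ∀ x : S, (x : Polynomial A) = Polynomial.X →
        (∃ e : (S ⧸ Ideal.span {x - 1}) ≃ₐ[R] A,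
          ∀ p : S, e (Ideal.Quotient.mk (Ideal.span {x - 1}) p) =
            Polynomial.eval 1 (p : Polynomial A)) ∧
        Nonempty ((S ⧸ Ideal.span {x}) ≃ₐ[R]
          TrivSqZeroExt R (A ⧸ Submodule.span R {(1 : A)})) := by
  obtain ⟨φ, hφ⟩ := Module.FaithfullyFlat.exists_linearMap_apply_one_eq_one R A
  exact ⟨Subalgebra.finite_and_projective_of_coeff_zero_mem_range φ hφ, fun S hS x hx ↦
    ⟨S.exists_quotient_span_X_sub_one_algEquiv hS x hx,
      S.nonempty_quotient_span_X_algEquiv φ hφ hS x hx⟩⟩
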